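/- arXiv:2109.13625 — 2 statements merged into one kernel-verified Lean document; each statement's English description precedes it below -/
import Mathlib

section
/- In the Edwards setting, for every x ∈ X with S_x(−𝟙) > −∞, the set C_x^F = { μ ∈ M_x^F : μ(X) ≤ −S_x(−𝟙) } is compact in the weak* topology on positive Borel measures on X. -/
open MeasureTheory Filter Set
open scoped ENNReal

noncomputable section

/-- The nonnegative part of an extended real, as an element of `ℝ≥0∞`. -/
def erealToENNReal (x : EReal) : ℝ≥0∞ := if x = ⊤ then ⊤ else ENNReal.ofReal x.toReal

/-- The integral of an `EReal`-valued function: upper Lebesgue integral of the positive part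
minus that of the negative part. -/
def erealIntegral {α : Type*} [MeasurableSpace α] (μ : Measure α) (f : α → EReal) : EReal :=
  ((∫⁻ a, erealToENNReal (f a) ∂μ : ℝ≥0∞) : EReal) -
    ((∫⁻ a, erealToENNReal (-(f a)) ∂μ : ℝ≥0∞) : EReal)

/-- The Edwards setting: `F` is a cone of upper bounded, upper semicontinuous functions on `X`
with values in `[-∞, ∞)` (not necessarily containing the zero function). -/
def IsEdwardsCone {X : Type*} [TopologicalSpace X] (F : Set (X → EReal)) : Prop :=
  (∀ u ∈ F, UpperSemicontinuous u) ∧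
  (∀ u ∈ F, ∃ K : ℝ, ∀ x, u x ≤ (K : EReal)) ∧
  (∀ u ∈ F, ∀ c : ℝ, 0 < c → (fun x => (c : EReal) * u x) ∈ F) ∧
  (∀ u ∈ F, ∀ v ∈ F, (fun x => u x + v x) ∈ F)

/-- `M_x^F`: the positive (Borel) measures `μ` on `X` with `u(x) ≤ ∫ u dμ` for all `u ∈ F`. -/
def edwardsM {X : Type*} [MeasurableSpace X] (F : Set (X → EReal)) (x : X) :
    Set (Measure X) :=
  { μ | ∀ u ∈ F, u x ≤ erealIntegral μ u }

/-- `S_x(g) = sup { u(x) : u ∈ F, u ≤ g }` (`= -∞`, i.e. `sSup ∅`, if no `u ∈ F` satisfies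
`u ≤ g`). -/
def edwardsS {X : Type*} (F : Set (X → EReal)) (x : X) (g : X → EReal) : EReal :=
  sSup { t : EReal | ∃ u ∈ F, (∀ y, u y ≤ g y) ∧ t = u x }

/-- `I_x(g) = inf { ∫ g dμ : μ ∈ M_x^F }`. -/
def edwardsI {X : Type*} [MeasurableSpace X] (F : Set (X → EReal)) (x : X)
    (g : X → EReal) : EReal :=
  sInf { t : EReal | ∃ μ ∈ edwardsM F x, t = erealIntegral μ g }

/-- `C_x^F = { μ ∈ M_x^F : μ(X) ≤ -S_x(-𝟙) }`. -/
def edwardsC {X : Type*} [MeasurableSpace X] (F : Set (X → EReal)) (x : X) :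
    Set (Measure X) :=
  { μ | μ ∈ edwardsM F x ∧
      ((μ Set.univ : ℝ≥0∞) : EReal) ≤ -(edwardsS F x (fun _ => (-1 : EReal))) }

/-- A lower semicontinuous `ℝ≥0∞`-valued function is the supremum of an increasing sequence of
nonnegative bounded continuous functions. -/
theorem LowerSemicontinuous.exists_monotone_boundedContinuous_iSup_eq {X : Type*}
    [PseudoEMetricSpace X] {f : X → ℝ≥0∞} (hf : LowerSemicontinuous f) :
    ∃ g : ℕ → BoundedContinuousFunction X NNReal,
      Monotone (fun n y => (g n y : ℝ≥0∞)) ∧ ∀ y, ⨆ n, (g n y : ℝ≥0∞) = f y := by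
  let h : ℕ → X → ℝ≥0∞ := fun n y => min (n : ℝ≥0∞) (⨅ z, f z + n * edist y z)
  have h_le (n : ℕ) (y : X) : h n y ≤ n := min_le_left _ _
  have h_ne (n : ℕ) (y : X) : h n y ≠ ⊤ := ne_top_of_le_ne_top (ENNReal.natCast_ne_top n) (h_le n y)
  have h_cont (n : ℕ) : Continuous (h n) := by
    refine continuous_const.min ?_
    refine continuous_of_le_add_edist n (ENNReal.natCast_ne_top n) fun y y' => ?_
    rw [ENNReal.iInf_add]
    refine le_iInf fun z => (iInf_le _ z).trans ?_
    rw [add_assoc, ← mul_add]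
    gcongr
    rw [add_comm]
    exact edist_triangle _ _ _
  have g_cont (n : ℕ) : Continuous fun y => (h n y).toNNReal :=
    ENNReal.continuousOn_toNNReal.comp_continuous (h_cont n) (h_ne n)
  have g_le (n : ℕ) (y : X) : (h n y).toNNReal ≤ n := by
    simpa using ENNReal.toNNReal_mono (ENNReal.natCast_ne_top n) (h_le n y)
  have g_dist (n : ℕ) (y z : X) : dist (h n y).toNNReal (h n z).toNNReal ≤ n := by
    have hy : ((h n y).toNNReal : ℝ) ≤ n := by exact_mod_cast g_le n y
    have hz : ((h n z).toNNReal : ℝ) ≤ n := by exact_mod_cast g_le n z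
    exact abs_sub_le_of_nonneg_of_le (NNReal.coe_nonneg _) hy (NNReal.coe_nonneg _) hz
  let g : ℕ → BoundedContinuousFunction X NNReal :=
    fun n => BoundedContinuousFunction.mkOfBound ⟨_, g_cont n⟩ n (g_dist n)
  have hg (n : ℕ) (y : X) : (g n y : ℝ≥0∞) = h n y := ENNReal.coe_toNNReal (h_ne n y)
  refine ⟨g, ?_, ?_⟩
  · intro m n hmn y
    simp only [hg, h]
    gcongr
  · intro y
    simp only [hg]
    refine le_antisymm (iSup_le fun n => (min_le_right _ _).trans ?_) ?_
    · exact (iInf_le _ y).trans (by simp)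
    · refine le_of_forall_lt fun a ha => ?_
      obtain ⟨b, hab, hb⟩ := exists_between ha
      obtain ⟨r, hr, hball⟩ := EMetric.mem_nhds_iff.1 (hf y b hb)
      obtain ⟨m, hm⟩ := ENNReal.exists_nat_gt hb.ne_top
      obtain ⟨k, hk⟩ := ENNReal.exists_nat_mul_gt hr.ne' hb.ne_top
      refine hab.trans_le (le_iSup_of_le (max m k) (le_min ?_ (le_iInf fun z => ?_)))
      · exact hm.le.trans (by exact_mod_cast le_max_left m k)
      · by_cases hz : z ∈ Metric.eball y r
        · exact (hball hz).le.trans le_self_add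
        · rw [Metric.mem_eball, not_lt, edist_comm] at hz
          refine (hk.le.trans ?_).trans le_add_self
          gcongr
          exact le_max_right m k

/-- Subtraction-free form of `a ≤ P - N` for extended nonnegative `P`, `N` and real `a`. -/
theorem EReal.coe_le_coe_ennreal_sub_iff {a : ℝ} {P N : ℝ≥0∞} (hP : P ≠ ⊤) :
    (a : EReal) ≤ (P : EReal) - (N : EReal) ↔
      ENNReal.ofReal a + N ≤ P + ENNReal.ofReal (-a) := by
  lift P to NNReal using hP
  induction N with
  | top => simp
  | coe N =>
    rw [← ENNReal.toReal_le_toReal (by finiteness) (by finiteness),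
      ENNReal.toReal_add (by finiteness) (by finiteness),
      ENNReal.toReal_add (by finiteness) (by finiteness),
      ENNReal.toReal_ofReal', ENNReal.toReal_ofReal']
    have hsub : ((P : ℝ≥0∞) : EReal) - ((N : ℝ≥0∞) : EReal) = ((P - N : ℝ) : EReal) := rfl
    rw [hsub, EReal.coe_le_coe_iff]
    simp only [ENNReal.coe_toReal]
    constructor <;> intro h <;>
      rcases le_total a 0 with ha | ha <;> simp [ha] at h ⊢ <;> linarith

theorem EReal.toENNReal_add_toENNReal_sub {K : ℝ} (hK : 0 ≤ K) {t : EReal} (ht : t ≤ K) :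
    t.toENNReal + ((K : EReal) - t).toENNReal = ENNReal.ofReal K + (-t).toENNReal := by
  induction t with
  | bot => simp
  | top => simp at ht
  | coe t =>
    have ht : t ≤ K := by exact_mod_cast ht
    rw [← EReal.coe_neg, ← EReal.coe_sub]
    simp only [EReal.toENNReal_of_ne_top (EReal.coe_ne_top _), EReal.toReal_coe]
    rcases le_total t 0 with h | h
    · rw [ENNReal.ofReal_of_nonpos h, zero_add, ← ENNReal.ofReal_add hK (by linarith)]
      ring_nf
    · rw [ENNReal.ofReal_of_nonpos (neg_nonpos.2 h), add_zero,
        ← ENNReal.ofReal_add h (by linarith)]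
      ring_nf

theorem EReal.continuous_coe_sub (K : ℝ) : Continuous fun t : EReal => (K : EReal) - t := by
  refine continuous_iff_continuousAt.2 fun t => ?_
  exact (EReal.continuousAt_add (p := ((K : EReal), -t)) (by simp) (by simp)).comp
    (f := fun t : EReal => ((K : EReal), -t)) (by fun_prop)

/-- For a finite measure and `u ≤ K`, the inequality `a ≤ ∫ u dμ` expressed through the
nonnegative function `K - u`. -/
theorem coe_le_erealIntegral_iff {X : Type*} [MeasurableSpace X] {μ : Measure X}
    [IsFiniteMeasure μ] {u : X → EReal} (hu : Measurable u) {K : ℝ} (hK : 0 ≤ K)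
    (huK : ∀ y, u y ≤ K) (a : ℝ) :
    (a : EReal) ≤ erealIntegral μ u ↔
      ENNReal.ofReal a + ∫⁻ y, ((K : EReal) - u y).toENNReal ∂μ ≤
        ENNReal.ofReal K * μ univ + ENNReal.ofReal (-a) := by
  have hP : ∫⁻ y, (u y).toENNReal ∂μ ≠ ⊤ := by
    refine ne_top_of_le_ne_top (b := ENNReal.ofReal K * μ univ) (by finiteness) ?_
    rw [← lintegral_const]
    refine lintegral_mono fun y => ?_
    simpa [EReal.toENNReal_of_ne_top] using EReal.toENNReal_le_toENNReal (huK y)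
  have hsum : ∫⁻ y, (u y).toENNReal ∂μ + ∫⁻ y, ((K : EReal) - u y).toENNReal ∂μ =
      ENNReal.ofReal K * μ univ + ∫⁻ y, (-u y).toENNReal ∂μ := by
    rw [← lintegral_const, ← lintegral_add_left hu.ereal_toENNReal,
      ← lintegral_add_left measurable_const]
    exact lintegral_congr fun y => EReal.toENNReal_add_toENNReal_sub hK (huK y)
  refine (EReal.coe_le_coe_ennreal_sub_iff hP).trans ?_
  have hKμ : ENNReal.ofReal K * μ univ ≠ ⊤ := by finiteness
  change ENNReal.ofReal a + ∫⁻ y, (-u y).toENNReal ∂μ ≤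
    ∫⁻ y, (u y).toENNReal ∂μ + ENNReal.ofReal (-a) ↔ _
  rw [← ENNReal.add_le_add_iff_left hKμ, add_left_comm, ← hsum, add_left_comm,
    add_left_comm (ENNReal.ofReal K * μ univ), ENNReal.add_le_add_iff_left hP]

/-- The integral of an upper semicontinuous function bounded above is weak* upper
semicontinuous in the measure. -/
theorem isClosed_setOf_le_erealIntegral {X : Type*} [PseudoEMetricSpace X] [MeasurableSpace X]
    [BorelSpace X] {u : X → EReal} (hu : UpperSemicontinuous u) {K : ℝ}
    (huK : ∀ y, u y ≤ K) {t : EReal} (ht : t ≠ ⊤) :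
    IsClosed {μ : FiniteMeasure X | t ≤ erealIntegral (μ : Measure X) u} := by
  induction t with
  | bot => simp
  | top => exact absurd rfl ht
  | coe a =>
    wlog hK : 0 ≤ K generalizing K
    · exact this (K := 0) (fun y => (huK y).trans (by exact_mod_cast (not_le.1 hK).le)) le_rfl
    have hlsc : LowerSemicontinuous fun y => ((K : EReal) - u y).toENNReal :=
      (EReal.continuous_toENNReal.comp (EReal.continuous_coe_sub K)).comp_upperSemicontinuous_antitone
        hu fun s t hst => EReal.toENNReal_le_toENNReal (EReal.sub_le_sub le_rfl hst)
    obtain ⟨g, hg_mono, hg_sup⟩ := hlsc.exists_monotone_boundedContinuous_iSup_eq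
    have key (μ : FiniteMeasure X) : (a : EReal) ≤ erealIntegral (μ : Measure X) u ↔
        ∀ n, ENNReal.ofReal a + (μ.testAgainstNN (g n) : ℝ≥0∞) ≤
          ENNReal.ofReal K * μ.mass + ENNReal.ofReal (-a) := by
      rw [coe_le_erealIntegral_iff hu.measurable hK huK, ← lintegral_congr hg_sup,
        lintegral_iSup (fun n => (g n).continuous.measurable.coe_nnreal_ennreal) hg_mono,
        ENNReal.add_iSup, iSup_le_iff]
      simp
    simp only [key, ofPred_forall]
    refine isClosed_iInter fun n => isClosed_le ?_ ?_
    · exact continuous_const.add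
        (ENNReal.continuous_coe.comp (FiniteMeasure.continuous_testAgainstNN_eval (g n)))
    · exact (ENNReal.continuous_const_mul ENNReal.ofReal_ne_top).comp
        (ENNReal.continuous_coe.comp FiniteMeasure.continuous_mass) |>.add continuous_const

/-- `C_x^F` is compact in the weak* topology on positive (finite) Borel measures on `X`,
whenever `S_x(-𝟙) > -∞`. -/
theorem edwardsC_weakStar_compact {X : Type*} [MetricSpace X] [CompactSpace X]
    [MeasurableSpace X] [BorelSpace X] (F : Set (X → EReal)) (hF : IsEdwardsCone F)
    (x : X) (hx : ⊥ < edwardsS F x (fun _ => (-1 : EReal))) :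
    IsCompact { μ : FiniteMeasure X |
      (μ : Measure X) ∈ edwardsM F x ∧
      (((μ : Measure X) Set.univ : ℝ≥0∞) : EReal) ≤
        -(edwardsS F x (fun _ => (-1 : EReal))) } := by
  obtain ⟨husc, hbdd, -, -⟩ := hF
  have hclosed : IsClosed {μ : FiniteMeasure X | (μ : Measure X) ∈ edwardsM F x} := by
    have : {μ : FiniteMeasure X | (μ : Measure X) ∈ edwardsM F x} =
        ⋂ u ∈ F, {μ : FiniteMeasure X | u x ≤ erealIntegral (μ : Measure X) u} := by
      ext μ
      simp [edwardsM]
    rw [this]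
    refine isClosed_biInter fun u hu => ?_
    obtain ⟨K, hK⟩ := hbdd u hu
    exact isClosed_setOf_le_erealIntegral (husc u hu) hK
      (ne_top_of_le_ne_top (EReal.coe_ne_top K) (hK x))
  have hS : -edwardsS F x (fun _ => (-1 : EReal)) ≠ ⊤ := by
    simpa [EReal.neg_eq_top_iff] using hx.ne'
  have hS0 : 0 ≤ -edwardsS F x (fun _ => (-1 : EReal)) := by
    rw [EReal.le_neg, neg_zero]
    refine sSup_le ?_
    rintro _ ⟨u, -, hu, rfl⟩
    exact (hu x).trans (by norm_num)
  generalize -edwardsS F x (fun _ => (-1 : EReal)) = C at hS hS0 ⊢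
  obtain ⟨c, rfl⟩ : ∃ c : NNReal, C = ((c : ℝ≥0∞) : EReal) := by
    lift C to ℝ using ⟨hS, ne_bot_of_le_ne_bot EReal.zero_ne_bot hS0⟩
    exact ⟨⟨C, by exact_mod_cast hS0⟩, rfl⟩
  simp only [EReal.coe_ennreal_le_coe_ennreal_iff, ← FiniteMeasure.ennreal_mass,
    ENNReal.coe_le_coe]
  exact (isCompact_setOfPred_finiteMeasure_le_of_compactSpace X c).inter_left hclosed

end
end

section
/- In the Edwards setting, let x ∈ X satisfy S_x(−𝟙) > −∞ and let g : X → ℝ be continuous. Then S_x(g) is finite and there exists a measure μ ∈ C_x^F with ∫ g dμ = S_x(g); in particular S_x(g) = I_x(g). -/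
open MeasureTheory Filter Set
open scoped ENNReal

noncomputable section

theorem erealToENNReal_eq_toENNReal (x : EReal) : erealToENNReal x = x.toENNReal := rfl

theorem erealIntegral_mono {α : Type*} [MeasurableSpace α] (μ : Measure α) {f g : α → EReal}
    (h : ∀ a, f a ≤ g a) : erealIntegral μ f ≤ erealIntegral μ g := by
  refine EReal.sub_le_sub ?_ ?_
  · exact EReal.coe_ennreal_le_coe_ennreal_iff.2
      (lintegral_mono fun a => EReal.toENNReal_le_toENNReal (h a))
  · exact EReal.coe_ennreal_le_coe_ennreal_iff.2
      (lintegral_mono fun a => EReal.toENNReal_le_toENNReal (EReal.neg_le_neg_iff.2 (h a)))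

theorem EReal.coe_ennreal_sub_of_ne_top {a b : ℝ≥0∞} (ha : a ≠ ⊤) (hb : b ≠ ⊤) :
    (a : EReal) - (b : EReal) = ((a.toReal - b.toReal : ℝ) : EReal) := by
  lift a to NNReal using ha
  lift b to NNReal using hb
  rfl

theorem erealIntegral_coe {α : Type*} [MeasurableSpace α] {μ : Measure α} {f : α → ℝ}
    (hf : Integrable f μ) :
    erealIntegral μ (fun a => (f a : EReal)) = ((∫ a, f a ∂μ : ℝ) : EReal) := by
  rw [integral_eq_lintegral_pos_part_sub_lintegral_neg_part hf]
  have hpos : ∫⁻ a, ENNReal.ofReal (f a) ∂μ ≠ ⊤ := hf.lintegral_lt_top.ne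
  have hneg : ∫⁻ a, ENNReal.ofReal (-f a) ∂μ ≠ ⊤ := hf.neg.lintegral_lt_top.ne
  exact EReal.coe_ennreal_sub_of_ne_top hpos hneg

/-- The Lipschitz regularization (truncated inf-convolution with `n * edist`) of `f`. -/
def lipschitzRegularization {X : Type*} [PseudoEMetricSpace X] (f : X → ℝ≥0∞) (n : ℕ) (x : X) :
    ℝ≥0∞ :=
  ⨅ y, (min (f y) n + n * edist x y)

section lipschitzRegularization

variable {X : Type*} [PseudoEMetricSpace X] (f : X → ℝ≥0∞)

theorem continuous_lipschitzRegularization (n : ℕ) :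
    Continuous (lipschitzRegularization f n) := by
  refine continuous_of_le_add_edist n (by simp) fun x z => ?_
  unfold lipschitzRegularization
  rw [ENNReal.iInf_add]
  refine le_iInf fun y => (iInf_le _ y).trans ?_
  rw [add_assoc, ← mul_add]
  gcongr
  rw [add_comm]
  exact edist_triangle x z y

theorem lipschitzRegularization_le_min (n : ℕ) (x : X) :
    lipschitzRegularization f n x ≤ min (f x) n :=
  (iInf_le _ x).trans (by simp)

theorem monotone_lipschitzRegularization : Monotone (lipschitzRegularization f) := by
  intro m n hmn x
  refine iInf_mono fun y => ?_
  have : (m : ℝ≥0∞) ≤ n := by exact_mod_cast hmn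
  gcongr

theorem iSup_lipschitzRegularization (hf : LowerSemicontinuous f) (x : X) :
    ⨆ n, lipschitzRegularization f n x = f x := by
  refine le_antisymm
    (iSup_le fun n => (lipschitzRegularization_le_min f n x).trans (min_le_left _ _)) ?_
  refine le_of_forall_lt fun a ha => ?_
  obtain ⟨b, hab, hb⟩ := exists_between ha
  refine hab.trans_le ?_
  obtain ⟨r, hr, hball⟩ := EMetric.mem_nhds_iff.1 (hf x b hb)
  have hbtop : b ≠ ⊤ := hb.ne_top
  obtain ⟨m, hm⟩ := ENNReal.exists_nat_gt hbtop
  obtain ⟨k, hk⟩ := ENNReal.exists_nat_mul_gt hr.ne' hbtop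
  refine le_iSup_of_le (max m k) (le_iInf fun y => ?_)
  by_cases hy : edist x y < r
  · have hby : b < f y := hball (by rwa [Metric.mem_eball, edist_comm])
    refine le_add_right (le_min hby.le (hm.le.trans ?_))
    exact_mod_cast le_max_left m k
  · refine le_add_left (hk.le.trans ?_)
    have : (k : ℝ≥0∞) ≤ (max m k : ℕ) := by exact_mod_cast le_max_right m k
    exact mul_le_mul' this (not_lt.1 hy)

end lipschitzRegularization

/-- An upper semicontinuous function has an integral at least `a` as soon as all its continuous
majorants do. -/
theorem le_erealIntegral_of_upperSemicontinuous {X : Type*} [MetricSpace X] [CompactSpace X]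
    [MeasurableSpace X] [BorelSpace X] (μ : Measure X) [IsFiniteMeasure μ] {u : X → EReal}
    (hu : UpperSemicontinuous u) {K : ℝ} (hK0 : 0 ≤ K) (hK : ∀ y, u y ≤ (K : EReal)) {a : EReal}
    (ha : ∀ h : C(X, ℝ), (∀ y, u y ≤ (h y : EReal)) → a ≤ ((∫ y, h y ∂μ : ℝ) : EReal)) :
    a ≤ erealIntegral μ u := by
  induction a with
  | bot => exact bot_le
  | top => exact absurd (ha (ContinuousMap.const X K) hK) (not_le.2 (EReal.coe_lt_top _))
  | coe r =>
  simp only [EReal.coe_le_coe_iff] at ha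
  set f : X → ℝ≥0∞ := fun y => ((K : EReal) - u y).toENNReal with hf_def
  have hcont : Continuous fun t : EReal => ((K : EReal) - t).toENNReal := by
    refine EReal.continuous_toENNReal.comp (continuous_iff_continuousAt.2 fun t => ?_)
    exact (EReal.continuousAt_add (p := ((K : EReal), -t)) (by simp) (by simp)).comp
      (f := fun t : EReal => ((K : EReal), -t)) (by fun_prop)
  have hanti : Antitone fun t : EReal => ((K : EReal) - t).toENNReal := fun s t hst =>
    EReal.toENNReal_le_toENNReal (EReal.sub_le_sub le_rfl hst)
  have hf : LowerSemicontinuous f := hcont.comp_upperSemicontinuous_antitone hu hanti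
  have hle : ∀ n, ∫⁻ y, lipschitzRegularization f n y ∂μ
      ≤ ENNReal.ofReal (K * μ.real univ - r) := by
    intro n
    have hfin : ∀ y, lipschitzRegularization f n y ≠ ⊤ := fun y =>
      (((lipschitzRegularization_le_min f n y).trans (min_le_right _ _)).trans_lt
        (ENNReal.natCast_lt_top n)).ne
    have hc : Continuous fun y => (lipschitzRegularization f n y).toReal :=
      ENNReal.continuousOn_toReal.comp_continuous (continuous_lipschitzRegularization f n) hfin
    have hint : Integrable (fun y => (lipschitzRegularization f n y).toReal) μ :=
      hc.integrable_of_hasCompactSupport (HasCompactSupport.of_compactSpace _)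
    have h := ha ⟨fun y => K - (lipschitzRegularization f n y).toReal,
      continuous_const.sub hc⟩ fun y => by
        have h1 := (lipschitzRegularization_le_min f n y).trans (min_le_left _ _)
        have h2 := hfin y
        have h3 := hK y
        simp only [hf_def] at h1
        rw [ContinuousMap.coe_mk]
        generalize lipschitzRegularization _ n y = s at h1 h2 ⊢
        lift s to NNReal using h2
        change u y ≤ ((K - s : ℝ) : EReal)
        induction hv : u y with
        | bot => exact bot_le
        | top => simp [hv] at h3
        | coe v =>
          rw [hv] at h1 h3
          rw [← EReal.coe_sub, EReal.real_coe_toENNReal, ← ENNReal.ofReal_coe_nnreal,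
            ENNReal.ofReal_le_ofReal_iff (sub_nonneg.2 (EReal.coe_le_coe_iff.1 h3))] at h1
          exact EReal.coe_le_coe_iff.2 (by linarith)
    simp only [ContinuousMap.coe_mk] at h
    rw [integral_sub (integrable_const K) hint, integral_const, smul_eq_mul] at h
    calc ∫⁻ y, lipschitzRegularization f n y ∂μ
        = ∫⁻ y, ENNReal.ofReal (lipschitzRegularization f n y).toReal ∂μ :=
          lintegral_congr fun y => (ENNReal.ofReal_toReal (hfin y)).symm
      _ = ENNReal.ofReal (∫ y, (lipschitzRegularization f n y).toReal ∂μ) :=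
          (ofReal_integral_eq_lintegral_ofReal hint
            (Eventually.of_forall fun _ => ENNReal.toReal_nonneg)).symm
      _ ≤ _ := ENNReal.ofReal_le_ofReal (by linarith)
  have hB : ∫⁻ y, f y ∂μ ≤ ENNReal.ofReal (K * μ.real univ - r) := by
    simp_rw [← iSup_lipschitzRegularization f hf]
    rw [lintegral_iSup (fun n => (continuous_lipschitzRegularization f n).measurable)
      (monotone_lipschitzRegularization f)]
    exact iSup_le hle
  have hKr : 0 ≤ K * μ.real univ - r := by
    have h := ha (ContinuousMap.const X K) hK
    simp only [ContinuousMap.const_apply, integral_const, smul_eq_mul] at h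
    linarith
  have hA : ∫⁻ y, erealToENNReal (u y) ∂μ ≠ ⊤ := by
    refine ne_top_of_le_ne_top (b := ENNReal.ofReal K * μ univ)
      (ENNReal.mul_ne_top ENNReal.ofReal_ne_top (measure_ne_top μ _)) ?_
    rw [← lintegral_const]
    exact lintegral_mono fun y => EReal.toENNReal_le_toENNReal (hK y)
  have hsum : ∫⁻ y, erealToENNReal (u y) ∂μ + ∫⁻ y, f y ∂μ
      = ENNReal.ofReal K * μ univ + ∫⁻ y, erealToENNReal (-(u y)) ∂μ := by
    rw [← lintegral_const, ← lintegral_add_right _ hf.measurable,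
      ← lintegral_add_left measurable_const]
    refine lintegral_congr fun y => ?_
    have h3 := hK y
    simp only [hf_def, erealToENNReal_eq_toENNReal]
    induction hv : u y with
    | bot => simp
    | top => simp [hv] at h3
    | coe v =>
      rw [hv] at h3
      have h4 : v ≤ K := EReal.coe_le_coe_iff.1 h3
      rw [← EReal.coe_sub, ← EReal.coe_neg]
      simp only [EReal.real_coe_toENNReal]
      rcases le_total 0 v with h | h
      · rw [← ENNReal.ofReal_add h (by linarith), ENNReal.ofReal_of_nonpos (neg_nonpos.2 h),
          add_zero, add_sub_cancel]
      · rw [ENNReal.ofReal_of_nonpos h, ← ENNReal.ofReal_add hK0 (by linarith), zero_add,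
          sub_eq_add_neg]
  have hBtop : ∫⁻ y, f y ∂μ ≠ ⊤ := ne_top_of_le_ne_top ENNReal.ofReal_ne_top hB
  have hCtop : ∫⁻ y, erealToENNReal (-(u y)) ∂μ ≠ ⊤ :=
    ne_top_of_le_ne_top (ENNReal.add_ne_top.2 ⟨hA, hBtop⟩) (hsum ▸ le_add_left le_rfl)
  rw [erealIntegral, EReal.coe_ennreal_sub_of_ne_top hA hCtop, EReal.coe_le_coe_iff]
  have hsum' := congrArg ENNReal.toReal hsum
  rw [ENNReal.toReal_add hA hBtop,
    ENNReal.toReal_add (ENNReal.mul_ne_top ENNReal.ofReal_ne_top (measure_ne_top μ _)) hCtop,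
    ENNReal.toReal_mul, ENNReal.toReal_ofReal hK0] at hsum'
  have hB' := ENNReal.toReal_le_of_le_ofReal hKr hB
  rw [Measure.real] at hB'
  linarith

/-- A superlinear functional is dominated by a linear one agreeing with it at a given point. -/
theorem exists_linear_ge_superlinear {E : Type*} [AddCommGroup E] [Module ℝ E] (p : E → ℝ)
    (p_hom : ∀ c : ℝ, 0 < c → ∀ x, p (c • x) = c * p x) (p_add : ∀ x y, p x + p y ≤ p (x + y))
    (g : E) : ∃ φ : E →ₗ[ℝ] ℝ, φ g = p g ∧ ∀ x, p x ≤ φ x := by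
  have p_zero : p 0 = 0 := by
    have := p_hom 2 two_pos 0
    rw [smul_zero] at this
    linarith
  have hg : ∀ c : ℝ, c • g = 0 → (RingHom.id ℝ) c • p g = 0 := by
    intro c hc
    rcases smul_eq_zero.1 hc with h | h
    · simp [h]
    · simp [h, p_zero]
  obtain ⟨φ, hφg, hφ⟩ := exists_extension_of_le_sublinear
    (LinearPMap.mkSpanSingleton' g (p g) hg) (fun x => -p (-x))
    (fun c hc x => by rw [← smul_neg, p_hom c hc]; ring)
    (fun x y => by have := p_add (-x) (-y); rw [neg_add]; linarith)
    (by
      rintro ⟨y, hy⟩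
      obtain ⟨t, rfl⟩ := Submodule.mem_span_singleton.1 hy
      rw [LinearPMap.mkSpanSingleton'_apply]
      simp only [RingHom.id_apply, smul_eq_mul]
      rcases lt_trichotomy t 0 with h | h | h
      · rw [← neg_smul, p_hom _ (neg_pos.2 h)]
        linarith
      · simp [h, p_zero]
      · rw [← smul_neg, p_hom t h]
        have := p_add g (-g)
        rw [add_neg_cancel, p_zero] at this
        nlinarith)
  refine ⟨φ, ?_, fun x => ?_⟩
  · have h := hφg ⟨g, Submodule.mem_span_singleton_self g⟩
    exact h.trans (LinearPMap.mkSpanSingleton'_apply_self g (p g) hg _)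
  · have := hφ (-x)
    rw [neg_neg, map_neg] at this
    linarith

/-- The Riesz representation theorem for positive functionals on `C(X, ℝ)`, `X` compact. -/
theorem exists_measure_integral_eq_of_nonneg {X : Type*} [TopologicalSpace X] [T2Space X]
    [CompactSpace X] [MeasurableSpace X] [BorelSpace X] (φ : C(X, ℝ) →ₗ[ℝ] ℝ)
    (hφ : ∀ h : C(X, ℝ), 0 ≤ h → 0 ≤ φ h) :
    ∃ μ : Measure X, IsFiniteMeasure μ ∧ ∀ h : C(X, ℝ), ∫ y, h y ∂μ = φ h := by
  let ψ : CompactlySupportedContinuousMap X ℝ →ₗ[ℝ] ℝ :=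
    { toFun := fun h => φ h.toContinuousMap
      map_add' := fun h k => φ.map_add h.toContinuousMap k.toContinuousMap
      map_smul' := fun c h => φ.map_smul c h.toContinuousMap }
  let Λ := PositiveLinearMap.mk₀ ψ fun h hh => hφ h.toContinuousMap hh
  refine ⟨RealRMK.rieszMeasure Λ, ?_, fun h => ?_⟩
  · exact CompactSpace.isFiniteMeasure
  · exact RealRMK.integral_rieszMeasure Λ ⟨h, HasCompactSupport.of_compactSpace _⟩

theorem le_edwardsS {X : Type*} {F : Set (X → EReal)} {x : X} {g u : X → EReal} (hu : u ∈ F)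
    (hug : ∀ y, u y ≤ g y) : u x ≤ edwardsS F x g :=
  le_sSup ⟨u, hu, hug, rfl⟩

theorem exists_lt_of_lt_edwardsS {X : Type*} {F : Set (X → EReal)} {x : X} {g : X → EReal}
    {a : EReal} (ha : a < edwardsS F x g) : ∃ u ∈ F, (∀ y, u y ≤ g y) ∧ a < u x := by
  obtain ⟨_, ⟨u, hu, hug, rfl⟩, hlt⟩ := lt_sSup_iff.1 ha
  exact ⟨u, hu, hug, hlt⟩

theorem edwardsS_le {X : Type*} (F : Set (X → EReal)) (x : X) (g : X → EReal) :
    edwardsS F x g ≤ g x := by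
  refine sSup_le ?_
  rintro _ ⟨u, -, hug, rfl⟩
  exact hug x

theorem edwardsS_le_edwardsI {X : Type*} [MeasurableSpace X] (F : Set (X → EReal)) (x : X)
    (g : X → EReal) : edwardsS F x g ≤ edwardsI F x g := by
  refine sSup_le ?_
  rintro _ ⟨u, hu, hug, rfl⟩
  refine le_sInf ?_
  rintro _ ⟨μ, hμ, rfl⟩
  exact (hμ u hu).trans (erealIntegral_mono μ hug)

theorem edwardsS_ne_bot {X : Type*} [TopologicalSpace X] [CompactSpace X]
    {F : Set (X → EReal)} (hF : IsEdwardsCone F) {x : X}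
    (hx : ⊥ < edwardsS F x (fun _ => (-1 : EReal))) (g : C(X, ℝ)) :
    edwardsS F x (fun y => (g y : EReal)) ≠ ⊥ := by
  obtain ⟨u, hu, hu1, hux⟩ := exists_lt_of_lt_edwardsS hx
  have hc : 0 < ‖g‖ + 1 := by positivity
  have hle := le_edwardsS (x := x) (g := fun y => (g y : EReal)) (hF.2.2.1 u hu _ hc) fun y => by
    have h1 : ((‖g‖ + 1 : ℝ) : EReal) * u y ≤ ((‖g‖ + 1 : ℝ) : EReal) * (-1 : EReal) :=
      mul_le_mul_of_nonneg_left (hu1 y) (EReal.coe_nonneg.2 hc.le)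
    refine h1.trans ?_
    have h2 := neg_le_of_abs_le (g.norm_coe_le_norm y)
    have h3 : ((‖g‖ + 1 : ℝ) : EReal) * (-1 : EReal) = ((-(‖g‖ + 1) : ℝ) : EReal) := by
      rw [mul_neg, mul_one, EReal.coe_neg]
    rw [h3, EReal.coe_le_coe_iff]
    linarith
  refine (lt_of_lt_of_le ?_ hle).ne'
  induction hv : u x with
  | bot => simp [hv] at hux
  | top => exact absurd (hv ▸ hu1 x) (not_le.2 (EReal.coe_lt_top (-1)))
  | coe v => exact EReal.bot_lt_coe ((‖g‖ + 1) * v)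

theorem edwardsS_ne_top {X : Type*} (F : Set (X → EReal)) (x : X) (g : X → ℝ) :
    edwardsS F x (fun y => (g y : EReal)) ≠ ⊤ :=
  ((edwardsS_le F x _).trans_lt (EReal.coe_lt_top _)).ne

theorem coe_toReal_edwardsS {X : Type*} [TopologicalSpace X] [CompactSpace X]
    {F : Set (X → EReal)} (hF : IsEdwardsCone F) {x : X}
    (hx : ⊥ < edwardsS F x (fun _ => (-1 : EReal))) (g : C(X, ℝ)) :
    ((edwardsS F x (fun y => (g y : EReal))).toReal : EReal)
      = edwardsS F x (fun y => (g y : EReal)) :=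
  EReal.coe_toReal (edwardsS_ne_top F x g) (edwardsS_ne_bot hF hx g)

theorem edwardsS_toReal_add_le {X : Type*} [TopologicalSpace X] [CompactSpace X]
    {F : Set (X → EReal)} (hF : IsEdwardsCone F) {x : X}
    (hx : ⊥ < edwardsS F x (fun _ => (-1 : EReal))) (g h : C(X, ℝ)) :
    (edwardsS F x (fun y => (g y : EReal))).toReal + (edwardsS F x (fun y => (h y : EReal))).toReal
      ≤ (edwardsS F x (fun y => ((g + h) y : EReal))).toReal := by
  have hS := coe_toReal_edwardsS hF hx
  have hlt : ∀ (k : C(X, ℝ)) (ε : ℝ), 0 < ε → ∃ u ∈ F, (∀ y, u y ≤ (k y : EReal)) ∧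
      (((edwardsS F x (fun y => (k y : EReal))).toReal - ε : ℝ) : EReal) < u x := fun k ε hε =>
    exists_lt_of_lt_edwardsS (by rw [← hS k, EReal.coe_lt_coe_iff, EReal.toReal_coe]; linarith)
  refine le_of_forall_pos_le_add fun ε hε => ?_
  obtain ⟨u, hu, hug, hux⟩ := hlt g (ε / 2) (half_pos hε)
  obtain ⟨v, hv, hvh, hvx⟩ := hlt h (ε / 2) (half_pos hε)
  have hle := le_edwardsS (x := x) (g := fun y => ((g + h) y : EReal)) (hF.2.2.2 u hu v hv)
    fun y => by
      rw [ContinuousMap.add_apply, EReal.coe_add]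
      exact add_le_add (hug y) (hvh y)
  have hsum := (add_le_add hux.le hvx.le).trans hle
  rw [← hS (g + h), ← EReal.coe_add, EReal.coe_le_coe_iff] at hsum
  linarith

theorem edwardsS_toReal_smul {X : Type*} [TopologicalSpace X] [CompactSpace X]
    {F : Set (X → EReal)} (hF : IsEdwardsCone F) {x : X}
    (hx : ⊥ < edwardsS F x (fun _ => (-1 : EReal))) {c : ℝ} (hc : 0 < c) (g : C(X, ℝ)) :
    (edwardsS F x (fun y => ((c • g) y : EReal))).toReal
      = c * (edwardsS F x (fun y => (g y : EReal))).toReal := by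
  have key : ∀ (c : ℝ), 0 < c → ∀ g : C(X, ℝ),
      c * (edwardsS F x (fun y => (g y : EReal))).toReal
        ≤ (edwardsS F x (fun y => ((c • g) y : EReal))).toReal := by
    intro c hc g
    have hS := coe_toReal_edwardsS hF hx
    refine le_of_forall_pos_le_add fun ε hε => ?_
    obtain ⟨u, hu, hug, hux⟩ := exists_lt_of_lt_edwardsS (F := F) (x := x)
      (g := fun y => (g y : EReal))
      (a := (((edwardsS F x (fun y => (g y : EReal))).toReal - ε / c : ℝ) : EReal)) (by
        rw [← hS g, EReal.coe_lt_coe_iff, EReal.toReal_coe]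
        linarith [div_pos hε hc])
    have hc' : (0 : EReal) ≤ c := EReal.coe_nonneg.2 hc.le
    have hle := le_edwardsS (x := x) (g := fun y => ((c • g) y : EReal)) (hF.2.2.1 u hu c hc)
      fun y => by
        rw [ContinuousMap.smul_apply, smul_eq_mul, EReal.coe_mul]
        exact mul_le_mul_of_nonneg_left (hug y) hc'
    have h := (mul_le_mul_of_nonneg_left hux.le hc').trans hle
    rw [← hS (c • g), ← EReal.coe_mul, EReal.coe_le_coe_iff, mul_sub, mul_div_cancel₀ _ hc.ne']
      at h
    linarith
  refine le_antisymm ?_ (key c hc g)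
  have h := key c⁻¹ (inv_pos.2 hc) (c • g)
  rwa [inv_smul_smul₀ hc.ne', inv_mul_le_iff₀ hc] at h

/-- If `S_x(-𝟙) > -∞` and `g : X → ℝ` is continuous, then `S_x(g)` is finite, it is attained
as `∫ g dμ` for some `μ ∈ C_x^F`, and `S_x(g) = I_x(g)`. -/
theorem edwards_continuous_case {X : Type*} [MetricSpace X] [CompactSpace X]
    [MeasurableSpace X] [BorelSpace X] (F : Set (X → EReal)) (hF : IsEdwardsCone F)
    (x : X) (hx : ⊥ < edwardsS F x (fun _ => (-1 : EReal)))
    (g : X → ℝ) (hg : Continuous g) :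
    (edwardsS F x (fun y => (g y : EReal)) ≠ ⊥ ∧
        edwardsS F x (fun y => (g y : EReal)) ≠ ⊤) ∧
    (∃ μ ∈ edwardsC F x,
        erealIntegral μ (fun y => (g y : EReal)) = edwardsS F x (fun y => (g y : EReal))) ∧
    edwardsS F x (fun y => (g y : EReal)) = edwardsI F x (fun y => (g y : EReal)) := by
  have hS := coe_toReal_edwardsS hF hx
  obtain ⟨φ, hφg, hφ⟩ := exists_linear_ge_superlinear
    (fun k : C(X, ℝ) => (edwardsS F x (fun y => (k y : EReal))).toReal)
    (fun c hc k => edwardsS_toReal_smul hF hx hc k) (edwardsS_toReal_add_le hF hx) ⟨g, hg⟩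
  have hφS : ∀ (k : C(X, ℝ)), ∀ u ∈ F, (∀ y, u y ≤ (k y : EReal)) → u x ≤ (φ k : EReal) :=
    fun k u hu huk => (le_edwardsS hu huk).trans
      ((hS k).symm.trans_le (EReal.coe_le_coe_iff.2 (hφ k)))
  have hφ_nonneg : ∀ k : C(X, ℝ), 0 ≤ k → 0 ≤ φ k := by
    intro k hk
    refine le_trans ?_ (hφ k)
    have hzero := edwardsS_toReal_smul hF hx two_pos (0 : C(X, ℝ))
    rw [smul_zero] at hzero
    have hzero' : (edwardsS F x (fun y => ((0 : C(X, ℝ)) y : EReal))).toReal = 0 := by linarith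
    rw [← hzero', ← EReal.coe_le_coe_iff, hS, hS]
    refine sSup_le ?_
    rintro _ ⟨u, hu, hu0, rfl⟩
    exact le_edwardsS hu fun y => (hu0 y).trans (EReal.coe_le_coe_iff.2 (hk y))
  obtain ⟨μ, hμfin, hμ⟩ := exists_measure_integral_eq_of_nonneg φ hφ_nonneg
  have hμM : μ ∈ edwardsM F x := by
    intro u hu
    obtain ⟨K, hK⟩ := hF.2.1 u hu
    refine le_erealIntegral_of_upperSemicontinuous μ (hF.1 u hu) (le_max_right K 0)
      (fun y => (hK y).trans (EReal.coe_le_coe_iff.2 (le_max_left K 0))) fun k hk => ?_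
    rw [hμ]
    exact hφS k u hu hk
  have hμC : μ ∈ edwardsC F x := by
    refine ⟨hμM, ?_⟩
    have h := hφ (ContinuousMap.const X (-1))
    rw [← hμ, ← EReal.coe_le_coe_iff, hS] at h
    simp only [ContinuousMap.const_apply, integral_const, smul_eq_mul, mul_neg, mul_one,
      EReal.coe_neg, EReal.coe_one] at h
    rw [EReal.le_neg, ← EReal.coe_ennreal_toReal (measure_ne_top μ univ)]
    exact h
  have hμg : erealIntegral μ (fun y => (g y : EReal)) = edwardsS F x (fun y => (g y : EReal)) := by
    rw [erealIntegral_coe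
      (hg.integrable_of_hasCompactSupport (HasCompactSupport.of_compactSpace g))]
    refine Eq.trans ?_ (hS ⟨g, hg⟩)
    exact congrArg _ ((hμ ⟨g, hg⟩).trans hφg)
  exact ⟨⟨edwardsS_ne_bot hF hx ⟨g, hg⟩, edwardsS_ne_top F x g⟩, ⟨μ, hμC, hμg⟩,
    le_antisymm (edwardsS_le_edwardsI F x _) (sInf_le ⟨μ, hμM, hμg.symm⟩)⟩


end
end
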